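/- arXiv:1602.02971 — 2 statements merged into one kernel-verified Lean document; each statement's English description precedes it below -/
import Mathlib

section
/- The simple random walk on the Schreier graph Γ ≅ ℤ[1/2] is transient: for every starting point γ₀ ∈ ℤ[1/2], almost surely every finite subset S ⊆ ℤ[1/2] is visited by the walk (γ_n) only finitely often. -/
open MeasureTheory Filter

noncomputable section

/-- The four one-step moves of the simple random walk on the Schreier graph `Γ ≅ ℤ[1/2]`,
acting on rationals: `Ã`, `Ã⁻¹`, `B̃` and `B̃⁻¹` in this order. -/
def stepQ : Fin 4 → ℚ → ℚ
  | 0 => fun x => x - 1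
  | 1 => fun x => x + 1
  | 2 => fun x => if x ≤ 0 then x else if x ≤ 2 then x / 2 else x - 1
  | 3 => fun x => if x ≤ 0 then x else if x ≤ 1 then 2 * x else x + 1

/-- The trajectory of the simple random walk on `Γ` driven by the sequence of choices `s`,
started at `γ₀`: at each step one of the four maps `Ã, Ã⁻¹, B̃, B̃⁻¹` is applied. -/
def walkQ (s : ℕ → Fin 4) (γ₀ : ℚ) : ℕ → ℚ
  | 0 => γ₀
  | n + 1 => stepQ (s n) (walkQ s γ₀ n)

/-- The set `ℤ[1/2] ⊆ ℚ` of dyadic rational numbers. -/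
def DyadicQ : Set ℚ := {x | ∃ (k : ℤ) (m : ℕ), x = (k : ℚ) / 2 ^ m}


/-- dyadic level -/
def nuQ (x : ℚ) : ℕ := (-padicValRat 2 x).toNat

/-- the Lyapunov function -/
def fQ (x : ℚ) : ℝ := (3/4 : ℝ) ^ nuQ x * (if 1 < x ∧ nuQ x ≠ 0 then 7/8 else 1)

/-- `x` is an odd integer over `2^n` -/
def DD (n : ℕ) (x : ℚ) : Prop := ∃ k : ℤ, Odd k ∧ x = (k : ℚ) / 2 ^ n

lemma nuQ_int (k : ℤ) : nuQ (k : ℚ) = 0 := by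
  unfold nuQ
  rw [padicValRat.of_int]
  simp

lemma nuQ_DD {n : ℕ} {x : ℚ} (h : DD n x) : nuQ x = n := by
  obtain ⟨k, hk, rfl⟩ := h
  have hk0 : (k : ℚ) ≠ 0 := by
    have : k ≠ 0 := by rintro rfl; simp at hk
    exact_mod_cast this
  unfold nuQ
  have : Fact (Nat.Prime 2) := ⟨Nat.prime_two⟩
  rw [padicValRat.div hk0 (by positivity), padicValRat.of_int, padicValInt.eq_zero_of_not_dvd,
    padicValRat.pow (p := 2) 2]
  · have : padicValRat 2 (2 : ℚ) = 1 := padicValRat.self (p := 2) (by norm_num)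
    rw [this]; simp
  · intro h
    have h2 : Even k := even_iff_two_dvd.mpr (by exact_mod_cast h)
    exact (Int.not_even_iff_odd.mpr hk) h2

lemma fQ_int (k : ℤ) : fQ (k : ℚ) = 1 := by
  simp [fQ, nuQ_int]

lemma fQ_le {n : ℕ} {x : ℚ} (h : DD n x) (hx : x ≤ 1) : fQ x = (3/4 : ℝ) ^ n := by
  simp [fQ, nuQ_DD h, hx]

lemma fQ_gt {n : ℕ} {x : ℚ} (h : DD n x) (hn : n ≠ 0) (hx : 1 < x) :
    fQ x = (3/4 : ℝ) ^ n * (7/8) := by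
  simp [fQ, nuQ_DD h, hx, hn]

lemma fQ_le_any {n : ℕ} {x : ℚ} (h : DD n x) : fQ x ≤ (3/4 : ℝ) ^ n := by
  unfold fQ
  rw [nuQ_DD h]
  have : (0:ℝ) < (3/4 : ℝ) ^ n := by positivity
  split_ifs <;> nlinarith

lemma DD_add {n : ℕ} {x : ℚ} (h : DD (n+1) x) (m : ℤ) : DD (n+1) (x + m) := by
  obtain ⟨k, hk, rfl⟩ := h
  refine ⟨k + m * 2 ^ (n+1), ?_, ?_⟩
  · apply hk.add_even
    rw [pow_succ]
    exact (even_two.mul_left _).mul_left _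
  · push_cast
    field_simp

lemma DD_half {n : ℕ} {x : ℚ} (h : DD n x) : DD (n+1) (x / 2) := by
  obtain ⟨k, hk, rfl⟩ := h
  exact ⟨k, hk, by rw [pow_succ]; field_simp⟩

lemma DD_double {n : ℕ} {x : ℚ} (h : DD (n+1) x) : DD n (2 * x) := by
  obtain ⟨k, hk, rfl⟩ := h
  exact ⟨k, hk, by rw [pow_succ]; field_simp⟩

lemma dyadic_cases {x : ℚ} (hx : x ∈ DyadicQ) : (∃ k : ℤ, x = k) ∨ ∃ n, DD (n+1) x := by
  obtain ⟨k, m, rfl⟩ := hx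
  induction m generalizing k with
  | zero => left; exact ⟨k, by simp⟩
  | succ m ih =>
    rcases Int.even_or_odd k with ⟨j, hj⟩ | hk
    · have : (k : ℚ) / 2 ^ (m+1) = (j : ℚ) / 2 ^ m := by
        rw [hj, pow_succ]; push_cast; field_simp; ring
      rw [this]; exact ih j
    · right; exact ⟨m, k, hk, rfl⟩

lemma dyadic_step (i : Fin 4) {x : ℚ} (hx : x ∈ DyadicQ) : stepQ i x ∈ DyadicQ := by
  have hadd : ∀ j : ℤ, x + j ∈ DyadicQ := by
    obtain ⟨k, m, rfl⟩ := hx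
    intro j
    exact ⟨k + j * 2 ^ m, m, by push_cast; field_simp⟩
  have h1 : x - 1 ∈ DyadicQ := by simpa [sub_eq_add_neg] using hadd (-1)
  have h2 : x + 1 ∈ DyadicQ := by simpa using hadd 1
  have h3 : x / 2 ∈ DyadicQ := by
    obtain ⟨k, m, rfl⟩ := hx
    exact ⟨k, m + 1, by rw [pow_succ]; field_simp⟩
  have h4 : 2 * x ∈ DyadicQ := by
    obtain ⟨k, m, rfl⟩ := hx
    exact ⟨2 * k, m, by push_cast; field_simp⟩
  fin_cases i <;> simp only [stepQ] <;> (try split_ifs) <;> assumption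

lemma dyadic_walk (s : ℕ → Fin 4) {x : ℚ} (hx : x ∈ DyadicQ) (n : ℕ) : walkQ s x n ∈ DyadicQ := by
  induction n with
  | zero => exact hx
  | succ n ih => exact dyadic_step _ ih

lemma fQ_nonneg (x : ℚ) : 0 ≤ fQ x := by
  unfold fQ; split_ifs <;> positivity

lemma superharmonic {x : ℚ} (hx : x ∈ DyadicQ) :
    (1/16 : ℝ) * (if x = 1 then 1 else 0) + (∑ i, fQ (stepQ i x)) / 4 ≤ fQ x := by
  rw [Fin.sum_univ_four]
  simp only [stepQ]
  rcases dyadic_cases hx with ⟨k, rfl⟩ | ⟨n, h⟩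
  · have e1 : fQ ((k : ℚ) - 1) = 1 := by exact_mod_cast fQ_int (k - 1)
    have e2 : fQ ((k : ℚ) + 1) = 1 := by exact_mod_cast fQ_int (k + 1)
    have e3 : fQ (2 * (k : ℚ)) = 1 := by exact_mod_cast fQ_int (2 * k)
    have e0 := fQ_int k
    by_cases h1 : k = 1
    · subst h1
      have : fQ ((1 : ℚ) / 2) = (3/4 : ℝ) ^ 1 := fQ_le ⟨1, odd_one, by norm_num⟩ (by norm_num)
      norm_num at *
      rw [e1, e2, e0, this]; norm_num
    · have h1' : (k : ℚ) ≠ 1 := by exact_mod_cast h1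
      rw [if_neg h1', e1, e2, e0]
      by_cases h0 : k ≤ 0
      · have h0' : (k : ℚ) ≤ 0 := by exact_mod_cast h0
        simp only [if_pos h0', e0]; norm_num
      · have h0' : ¬ (k : ℚ) ≤ 0 := by exact_mod_cast h0
        have h2' : ¬ (k : ℚ) ≤ 1 := by
          have : ¬ k ≤ 1 := by omega
          exact_mod_cast this
        simp only [if_neg h0', if_neg h2', e2]
        by_cases h3 : k = 2
        · subst h3
          have := fQ_int 1
          norm_num at *
          rw [this]; norm_num
        · have h2' : ¬ (k : ℚ) ≤ 2 := by
            have : ¬ k ≤ 2 := by omega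
            exact_mod_cast this
          simp only [if_neg h2', e1]; norm_num
  · have hne : x ≠ 1 := by
      rintro rfl
      have h1 := nuQ_DD h
      have h2 := nuQ_int 1
      rw [Int.cast_one] at h2
      omega
    have hm : DD (n+1) (x - 1) := by simpa [sub_eq_add_neg] using DD_add h (-1)
    have hp : DD (n+1) (x + 1) := by simpa using DD_add h 1
    have hh := DD_half h
    have hd := DD_double h
    have hpos : (0:ℝ) < (3/4 : ℝ) ^ n := by positivity
    rw [if_neg hne]
    by_cases h0 : x ≤ 0
    · simp only [if_pos h0]
      rw [fQ_le hm (by linarith), fQ_le hp (by linarith), fQ_le h (by linarith)]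
      linarith
    · simp only [if_neg h0]
      push Not at h0
      by_cases h1 : x ≤ 1
      · rw [if_pos h1, if_pos (by linarith), fQ_le hm (by linarith),
          fQ_gt hp (by omega) (by linarith), fQ_le h h1, fQ_le hh (by linarith)]
        have := fQ_le_any hd
        simp only [pow_succ]
        linarith
      · rw [if_neg h1]
        push Not at h1
        by_cases h2 : x ≤ 2
        · rw [if_pos h2, fQ_le hm (by linarith), fQ_gt hp (by omega) (by linarith),
            fQ_gt h (by omega) h1, fQ_le hh (by linarith)]
          simp only [pow_succ]
          linarith
        · rw [if_neg h2]
          push Not at h2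
          rw [fQ_gt hm (by omega) (by linarith), fQ_gt hp (by omega) (by linarith),
            fQ_gt h (by omega) h1]
          linarith

/-- transition probabilities -/
def pQ : ℕ → ℚ → ℚ → ℝ
  | 0, x, y => if x = y then 1 else 0
  | n + 1, x, y => (∑ i, pQ n (stepQ i x) y) / 4

lemma pQ_nonneg (n : ℕ) (x y : ℚ) : 0 ≤ pQ n x y := by
  induction n generalizing x with
  | zero => simp only [pQ]; split_ifs <;> norm_num
  | succ n ih =>
    simp only [pQ]
    exact div_nonneg (Finset.sum_nonneg fun i _ => ih _) (by norm_num)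

lemma pQ_sum_le (n : ℕ) {x : ℚ} (hx : x ∈ DyadicQ) :
    (1/16 : ℝ) * ∑ m ∈ Finset.range n, pQ m x 1 ≤ fQ x := by
  induction n generalizing x with
  | zero => simpa using fQ_nonneg x
  | succ n ih =>
    refine le_trans ?_ (superharmonic hx)
    rw [Finset.sum_range_succ']
    simp only [pQ]
    rw [← Finset.sum_div, Finset.sum_comm]
    have : ∑ i, (1/16 : ℝ) * ∑ m ∈ Finset.range n, pQ m (stepQ i x) 1 ≤ ∑ i, fQ (stepQ i x) :=
      Finset.sum_le_sum fun i _ => ih (dyadic_step i hx)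
    rw [← Finset.mul_sum] at this
    linarith

lemma summable_one {x : ℚ} (hx : x ∈ DyadicQ) : Summable fun n => pQ n x 1 := by
  refine summable_of_sum_range_le (c := 16 * fQ x) (fun n => pQ_nonneg _ _ _) fun n => ?_
  have := pQ_sum_le n hx
  linarith

lemma pQ_mul_le (n k : ℕ) (x y z : ℚ) : pQ n x y * pQ k y z ≤ pQ (n + k) x z := by
  induction n generalizing x with
  | zero =>
    simp only [pQ, zero_add]
    split_ifs with h
    · simp [h]
    · simpa using pQ_nonneg k x z
  | succ n ih =>
    rw [Nat.succ_add]
    simp only [pQ]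
    rw [div_mul_eq_mul_div, Finset.sum_mul]
    have := Finset.sum_le_sum fun i (_ : i ∈ Finset.univ) => ih (stepQ i x)
    linarith

/-- `1` can be reached from `y` -/
def Reach (y : ℚ) : Prop := ∃ k, 0 < pQ k y 1

lemma reach_step (i : Fin 4) {y : ℚ} (h : Reach (stepQ i y)) : Reach y := by
  obtain ⟨k, hk⟩ := h
  refine ⟨k + 1, ?_⟩
  simp only [pQ]
  have := Finset.single_le_sum (f := fun i => pQ k (stepQ i y) 1)
    (fun i _ => pQ_nonneg _ _ _) (Finset.mem_univ i)
  linarith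

lemma reach_shift (m : ℤ) (y : ℚ) (h : Reach y) : Reach (y + m) := by
  induction m with
  | zero => simpa using h
  | succ n ih =>
    apply reach_step 0
    simp only [stepQ]
    convert ih using 1
    push_cast; ring
  | pred n ih =>
    apply reach_step 1
    simp only [stepQ]
    convert ih using 1
    push_cast; ring

lemma reach_int (m : ℤ) : Reach m := by
  have h1 : Reach 1 := ⟨0, by simp [pQ]⟩
  have := reach_shift (m - 1) 1 h1
  push_cast at this
  simpa using this

lemma reach_dyadic {y : ℚ} (hy : y ∈ DyadicQ) : Reach y := by
  obtain ⟨k, n, rfl⟩ := hy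
  induction n generalizing k with
  | zero => simpa using reach_int k
  | succ n ih =>
    set x : ℚ := (k : ℚ) / 2 ^ (n+1) with hx
    have hfl : Int.fract x + (⌊x⌋ : ℤ) = x := Int.fract_add_floor x
    rw [← hfl]
    apply reach_shift
    by_cases h0 : Int.fract x = 0
    · rw [h0]; exact_mod_cast reach_int 0
    · have hpos : 0 < Int.fract x := lt_of_le_of_ne (Int.fract_nonneg x) (Ne.symm h0)
      have hlt := Int.fract_lt_one x
      apply reach_step 3
      simp only [stepQ]
      rw [if_neg (not_le.mpr hpos), if_pos hlt.le]
      convert ih (k - ⌊x⌋ * 2 ^ (n+1)) using 1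
      have : Int.fract x = x - ⌊x⌋ := rfl
      rw [this]
      generalize (⌊x⌋ : ℤ) = j
      rw [hx]
      push_cast
      rw [pow_succ]
      field_simp

lemma summable_pQ {x y : ℚ} (hx : x ∈ DyadicQ) (hy : y ∈ DyadicQ) :
    Summable fun n => pQ n x y := by
  obtain ⟨k, hk⟩ := reach_dyadic hy
  have h1 : Summable fun n => pQ (n + k) x 1 := (summable_nat_add_iff k).mpr (summable_one hx)
  have h2 : Summable fun n => pQ n x y * pQ k y 1 :=
    Summable.of_nonneg_of_le (fun n => mul_nonneg (pQ_nonneg _ _ _) (pQ_nonneg _ _ _))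
      (fun n => pQ_mul_le n k x y 1) h1
  exact (summable_mul_right_iff hk.ne').mp h2

lemma walkQ_succ' (s : ℕ → Fin 4) (x : ℚ) (n : ℕ) :
    walkQ s x (n+1) = walkQ (fun i => s (i+1)) (stepQ (s 0) x) n := by
  induction n with
  | zero => rfl
  | succ n ih => rw [walkQ, ih]; rfl

lemma prob_le {Ω : Type*} [MeasurableSpace Ω] (P : Measure Ω) (s : ℕ → Ω → Fin 4)
    (hiid : ∀ (n : ℕ) (c : ℕ → Fin 4),
      P {ω | ∀ i < n, s i ω = c i} = (4 : ENNReal)⁻¹ ^ n) (y : ℚ) (n : ℕ) :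
    ∀ (m : ℕ) (c : ℕ → Fin 4) (x : ℚ),
      P {ω | (∀ i < m, s i ω = c i) ∧ walkQ (fun i => s (m + i) ω) x n = y} ≤
        (4 : ENNReal)⁻¹ ^ m * ENNReal.ofReal (pQ n x y) := by
  induction n with
  | zero =>
    intro m c x
    simp only [walkQ, pQ]
    split_ifs with h
    · simp only [h, and_true]
      rw [hiid]; simp
    · simp [h]
  | succ n ih =>
    intro m c x
    have hsub : {ω | (∀ i < m, s i ω = c i) ∧ walkQ (fun i => s (m + i) ω) x (n+1) = y} ⊆
        ⋃ j : Fin 4, {ω | (∀ i < m + 1, s i ω = Function.update c m j i) ∧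
          walkQ (fun i => s (m + 1 + i) ω) (stepQ j x) n = y} := by
      rintro ω ⟨h1, h2⟩
      rw [Set.mem_iUnion]
      refine ⟨s m ω, ?_, ?_⟩
      · intro i hi
        rcases Nat.lt_succ_iff_lt_or_eq.mp hi with h | h
        · rw [Function.update_of_ne h.ne]; exact h1 i h
        · subst h; simp
      · rw [walkQ_succ'] at h2
        rw [← h2]
        congr 1
        funext i
        congr 1
        omega
    calc _ ≤ _ := measure_mono hsub
      _ ≤ _ := measure_iUnion_fintype_le _ _
      _ ≤ ∑ j : Fin 4, (4 : ENNReal)⁻¹ ^ (m+1) * ENNReal.ofReal (pQ n (stepQ j x) y) :=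
        Finset.sum_le_sum fun j _ => ih (m+1) _ _
      _ = _ := by
        rw [← Finset.mul_sum, ← ENNReal.ofReal_sum_of_nonneg (fun i _ => pQ_nonneg _ _ _)]
        simp only [pQ]
        rw [ENNReal.ofReal_div_of_pos (by norm_num), pow_succ, ENNReal.div_eq_inv_mul, mul_assoc]
        norm_num

/-- The simple random walk on the Schreier graph `Γ ≅ ℤ[1/2]` is transient: for every starting
point `γ₀ ∈ ℤ[1/2]`, almost surely every finite subset `S ⊆ ℤ[1/2]` is visited only finitely
often.  The probability space is any space carrying an i.i.d. sequence `s` of uniformly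
distributed choices in `{1,2,3,4}` (i.e. the uniform product measure on `{1,2,3,4}^ℕ`). -/
theorem simple_random_walk_transient
    {Ω : Type*} [MeasurableSpace Ω] (P : Measure Ω) [IsProbabilityMeasure P]
    (s : ℕ → Ω → Fin 4)
    (hmeas : ∀ n i, MeasurableSet {ω | s n ω = i})
    (hiid : ∀ (n : ℕ) (c : ℕ → Fin 4),
      P {ω | ∀ i < n, s i ω = c i} = (4 : ENNReal)⁻¹ ^ n)
    (γ₀ : ℚ) (hγ₀ : γ₀ ∈ DyadicQ) :
    ∀ᵐ ω ∂P, ∀ S : Set ℚ, S.Finite →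
      {n : ℕ | walkQ (fun i => s i ω) γ₀ n ∈ S}.Finite := by
  have hae : ∀ᵐ ω ∂P, ∀ y : ℚ, ∀ᶠ n in atTop, y ∈ DyadicQ →
      walkQ (fun i => s i ω) γ₀ n ≠ y := by
    rw [ae_all_iff]
    intro y
    by_cases hy : y ∈ DyadicQ
    · have hle : ∀ n, P {ω | walkQ (fun i => s i ω) γ₀ n = y} ≤ ENNReal.ofReal (pQ n γ₀ y) := by
        intro n
        have := prob_le P s hiid y n 0 (fun _ => 0) γ₀
        simpa using this
      have hsum : ∑' n, P {ω | walkQ (fun i => s i ω) γ₀ n = y} ≠ ⊤ :=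
        ne_top_of_le_ne_top (summable_pQ hγ₀ hy).tsum_ofReal_ne_top (ENNReal.tsum_le_tsum hle)
      filter_upwards [ae_eventually_notMem hsum] with ω hω
      filter_upwards [hω] with n hn _
      exact hn
    · simp [hy]
  filter_upwards [hae] with ω hω S hS
  have h1 : ∀ᶠ n in atTop, ∀ y ∈ S, y ∈ DyadicQ → walkQ (fun i => s i ω) γ₀ n ≠ y :=
    (eventually_all_finite hS).mpr fun y _ => hω y
  rw [← Nat.cofinite_eq_atTop, eventually_cofinite] at h1
  refine h1.subset ?_
  intro n hn hcon
  exact hcon _ hn (dyadic_walk _ hγ₀ n) rfl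
end
end

section
/- The interval [0,1) is recurrent for the simple random walk on the Schreier graph Γ: for the walk started at γ₀ = 0, almost surely there are infinitely many n with 0 ≤ γ_n < 1. -/
open MeasureTheory Filter

noncomputable section

open Topology

/-- Extension of a finite word followed by a letter. -/
def extWord {n : ℕ} (t : Fin n → Fin 4) (a : Fin 4) : ℕ → Fin 4 :=
  fun i => if h : i < n then t ⟨i, h⟩ else a

lemma measurable_choice {Ω : Type*} [MeasurableSpace Ω] (s : ℕ → Ω → Fin 4)
    (hmeas : ∀ n i, MeasurableSet {ω | s n ω = i}) (n : ℕ) : Measurable (s n) :=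
  measurable_to_countable' (fun i => hmeas n i)

/-- The filtration generated by the first `n` choices. -/
def choiceFil {Ω : Type*} [m : MeasurableSpace Ω] (s : ℕ → Ω → Fin 4)
    (hs : ∀ n, Measurable (s n)) : Filtration ℕ m where
  seq n := MeasurableSpace.comap (fun ω (i : Fin n) => s i ω) inferInstance
  mono' := by
    intro a b hab
    rw [← measurable_iff_comap_le]
    refine @measurable_pi_lambda _ _ _ (_) _ _ ?_
    intro i
    have h1 : Measurable (fun t : Fin b → Fin 4 => t ⟨i, i.2.trans_le hab⟩) :=
      measurable_pi_apply _
    exact h1.comp (comap_measurable (fun ω (i : Fin b) => s i ω))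
  le' := by
    intro n
    rw [← measurable_iff_comap_le]
    exact measurable_pi_lambda _ (fun i => hs i)

lemma measure_word_inter {Ω : Type*} [MeasurableSpace Ω] (P : Measure Ω)
    (s : ℕ → Ω → Fin 4) (hs : ∀ n, Measurable (s n))
    (hiid : ∀ (n : ℕ) (c : ℕ → Fin 4),
      P {ω | ∀ i < n, s i ω = c i} = (4 : ENNReal)⁻¹ ^ n)
    (n : ℕ) (T : Finset (Fin n → Fin 4)) (a : Fin 4) :
    P ((fun ω (i : Fin n) => s i ω) ⁻¹' (T : Set (Fin n → Fin 4)) ∩ {ω | s n ω = a})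
      = T.card * (4 : ENNReal)⁻¹ ^ (n + 1) := by
  have hset : (fun ω (i : Fin n) => s i ω) ⁻¹' (T : Set (Fin n → Fin 4)) ∩ {ω | s n ω = a}
      = ⋃ t ∈ T, {ω | ∀ i < n + 1, s i ω = extWord t a i} := by
    ext ω
    simp only [Set.mem_inter_iff, Set.mem_preimage, Finset.mem_coe, Set.mem_ofPred_eq,
      Set.mem_iUnion, exists_prop]
    constructor
    · rintro ⟨h1, h2⟩
      refine ⟨_, h1, ?_⟩
      intro i hi
      unfold extWord
      split_ifs with h
      · rfl
      · have : i = n := by omega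
        rw [this, h2]
    · rintro ⟨t, ht, h⟩
      have h1 : (fun (i : Fin n) => s i ω) = t := by
        funext i
        have := h i (by omega)
        simpa [extWord] using this
      refine ⟨h1 ▸ ht, ?_⟩
      have := h n (by omega)
      simpa [extWord] using this
  rw [hset, measure_biUnion_finset]
  · rw [Finset.sum_congr rfl (fun t _ => hiid (n + 1) (extWord t a))]
    simp
  · intro t _ u _ htu
    refine Set.disjoint_left.2 ?_
    intro ω h1 h2
    apply htu
    funext i
    have h3 := h1 i (by omega)
    have h4 := h2 i (by omega)
    rw [h3] at h4
    simpa [extWord] using h4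
  · intro t _
    have : {ω | ∀ i < n + 1, s i ω = extWord t a i}
        = ⋂ i, ⋂ (_ : i < n + 1), s i ⁻¹' {extWord t a i} := by
      ext ω; simp
    rw [this]
    exact MeasurableSet.iInter fun i => MeasurableSet.iInter fun _ =>
      hs i (measurableSet_singleton _)

lemma integrable_choice {Ω : Type*} [MeasurableSpace Ω] (P : Measure Ω) [IsProbabilityMeasure P]
    (s : ℕ → Ω → Fin 4) (hs : ∀ n, Measurable (s n)) (φ : Fin 4 → ℝ) (n : ℕ) :
    Integrable (fun ω => φ (s n ω)) P := by
  refine Integrable.of_bound (C := ∑ a, |φ a|)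
    ((measurable_of_countable φ).comp (hs n)).aestronglyMeasurable ?_
  refine ae_of_all _ fun ω => ?_
  exact Finset.single_le_sum (f := fun a => |φ a|) (fun a _ => abs_nonneg _) (Finset.mem_univ _)

lemma setIntegral_choice {Ω : Type*} [MeasurableSpace Ω] (P : Measure Ω) [IsProbabilityMeasure P]
    (s : ℕ → Ω → Fin 4) (hs : ∀ n, Measurable (s n))
    (hiid : ∀ (n : ℕ) (c : ℕ → Fin 4),
      P {ω | ∀ i < n, s i ω = c i} = (4 : ENNReal)⁻¹ ^ n)
    (φ : Fin 4 → ℝ) (hφ : ∑ a, φ a = 0) (n : ℕ) (A : Set Ω)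
    (hA : MeasurableSet[choiceFil s hs n] A) :
    ∫ ω in A, φ (s n ω) ∂P = 0 := by
  classical
  have hA' : MeasurableSet A := (choiceFil s hs).le n A hA
  obtain ⟨T, -, rfl⟩ := hA
  have hdec : (fun ω => φ (s n ω)) =
      fun ω => ∑ a, Set.indicator {ω | s n ω = a} (fun _ => φ a) ω := by
    funext ω
    simp [Set.indicator_apply]
  have hm : ∀ a, MeasurableSet {ω | s n ω = a} := fun a => hs n (measurableSet_singleton a)
  rw [hdec, integral_finsetSum _ (fun a _ => ((integrable_const (φ a)).indicator (hm a)))]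
  have hval : ∀ a, ∫ ω in (fun ω (i : Fin n) => s i ω) ⁻¹' T,
      Set.indicator {ω | s n ω = a} (fun _ => φ a) ω ∂P
      = ((T.toFinset.card : ENNReal) * (4 : ENNReal)⁻¹ ^ (n + 1)).toReal * φ a := by
    intro a
    rw [setIntegral_indicator (hm a), setIntegral_const, ← measure_word_inter P s hs hiid n _ a]
    simp [Measure.real]
  simp_rw [hval]
  rw [← Finset.mul_sum, hφ, mul_zero]

lemma martingale_choice {Ω : Type*} [MeasurableSpace Ω] (P : Measure Ω) [IsProbabilityMeasure P]
    (s : ℕ → Ω → Fin 4) (hs : ∀ n, Measurable (s n))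
    (hiid : ∀ (n : ℕ) (c : ℕ → Fin 4),
      P {ω | ∀ i < n, s i ω = c i} = (4 : ENNReal)⁻¹ ^ n)
    (φ : Fin 4 → ℝ) (hφ : ∑ a, φ a = 0) :
    Martingale (fun n ω => ∑ i ∈ Finset.range n, φ (s i ω)) (choiceFil s hs) P := by
  have hint : ∀ n, Integrable (fun ω => ∑ i ∈ Finset.range n, φ (s i ω)) P := fun n =>
    integrable_finsetSum _ fun i _ => integrable_choice P s hs φ i
  refine martingale_of_setIntegral_eq_succ ?_ hint ?_
  · intro n
    have h1 : Measurable (fun t : Fin n → Fin 4 => ∑ i, φ (t i)) := measurable_of_countable _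
    have h2 := h1.comp (comap_measurable (fun ω (i : Fin n) => s i ω))
    have h3 : (fun ω => ∑ i ∈ Finset.range n, φ (s i ω))
        = (fun t : Fin n → Fin 4 => ∑ i, φ (t i)) ∘ (fun ω (i : Fin n) => s i ω) := by
      funext ω
      simp [Finset.sum_range]
    change StronglyMeasurable[choiceFil s hs n] (fun ω => ∑ i ∈ Finset.range n, φ (s i ω))
    rw [h3]
    exact Measurable.stronglyMeasurable h2
  · intro n A hA
    simp_rw [Finset.sum_range_succ]
    rw [integral_add (hint n).integrableOn (integrable_choice P s hs φ n).integrableOn,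
      setIntegral_choice P s hs hiid φ hφ n A hA, add_zero]

lemma converge_of_bddAbove {Ω : Type*} [MeasurableSpace Ω] (P : Measure Ω)
    [IsProbabilityMeasure P] (s : ℕ → Ω → Fin 4) (hs : ∀ n, Measurable (s n))
    (hiid : ∀ (n : ℕ) (c : ℕ → Fin 4),
      P {ω | ∀ i < n, s i ω = c i} = (4 : ENNReal)⁻¹ ^ n)
    (φ : Fin 4 → ℝ) (hφ : ∑ a, φ a = 0) :
    ∀ᵐ ω ∂P, BddAbove (Set.range fun n => ∑ i ∈ Finset.range n, φ (s i ω)) →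
      Tendsto (fun n => φ (s n ω)) atTop (𝓝 0) := by
  have hb := (martingale_choice P s hs hiid φ hφ).submartingale.bddAbove_iff_exists_tendsto
    (R := ∑ a, ‖φ a‖₊) (ae_of_all _ fun ω i => by
      simp only [Finset.sum_range_succ, add_sub_cancel_left]
      push_cast
      exact Finset.single_le_sum (f := fun a => ‖φ a‖) (fun a _ => norm_nonneg _)
        (Finset.mem_univ _))
  filter_upwards [hb] with ω h hbd
  obtain ⟨c, hc⟩ := h.1 hbd
  have h2 := (hc.comp (tendsto_add_atTop_nat 1)).sub hc
  simpa [Finset.sum_range_succ, Function.comp_def] using h2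

/-- Floor increments on the positive side. -/
def incPos : Fin 4 → ℤ := ![-1, 1, -1, 1]
/-- Floor increments on the negative side. -/
def incNeg : Fin 4 → ℤ := ![-1, 1, 0, 0]

lemma floor_step_pos (i : Fin 4) (x : ℚ) (hx : 1 ≤ ⌊x⌋) : ⌊stepQ i x⌋ = ⌊x⌋ + incPos i := by
  have h1 : (⌊x⌋ : ℚ) ≤ x := Int.floor_le x
  have h2 : x < ⌊x⌋ + 1 := Int.lt_floor_add_one x
  have h3 : (1 : ℚ) ≤ ⌊x⌋ := by exact_mod_cast hx
  have h4 : ⌊x⌋ = 1 ∨ (2 : ℚ) ≤ ⌊x⌋ := by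
    rcases hx.eq_or_lt with h | h
    · exact Or.inl h.symm
    · right; exact_mod_cast h
  rw [Int.floor_eq_iff]
  fin_cases i <;> simp [stepQ, incPos]
  · exact h1
  · exact h1
  · rw [if_neg (by linarith)]
    split_ifs with h
    · rcases h4 with h4 | h4
      · simp [h4] at *; constructor <;> linarith
      · constructor <;> linarith
    · constructor <;> linarith
  · rw [if_neg (by linarith)]
    split_ifs with h
    · constructor <;> linarith
    · constructor <;> linarith

lemma floor_step_neg (i : Fin 4) (x : ℚ) (hx : ⌊x⌋ ≤ -1) : ⌊stepQ i x⌋ = ⌊x⌋ + incNeg i := by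
  have h1 : (⌊x⌋ : ℚ) ≤ x := Int.floor_le x
  have h2 : x < ⌊x⌋ + 1 := Int.lt_floor_add_one x
  have h3 : (⌊x⌋ : ℚ) ≤ -1 := by exact_mod_cast hx
  have h4 : x ≤ 0 := by linarith
  rw [Int.floor_eq_iff]
  fin_cases i <;> simp [stepQ, incNeg, h4] <;> exact h1

lemma incPos_ge (i : Fin 4) : -1 ≤ incPos i := by fin_cases i <;> simp [incPos]
lemma incNeg_le (i : Fin 4) : incNeg i ≤ 1 := by fin_cases i <;> simp [incNeg]

lemma sum_pos (s : ℕ → Fin 4) (N : ℕ) (h : ∀ n ≥ N, ⌊walkQ s 0 n⌋ ≠ 0)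
    (hN : 1 ≤ ⌊walkQ s 0 N⌋) (m : ℕ) (hm : N ≤ m) : 1 ≤ ⌊walkQ s 0 m⌋ ∧
      ⌊walkQ s 0 m⌋ - ∑ i ∈ Finset.range m, incPos (s i)
        = ⌊walkQ s 0 N⌋ - ∑ i ∈ Finset.range N, incPos (s i) := by
  induction m, hm using Nat.le_induction with
  | base => exact ⟨hN, rfl⟩
  | succ k hk ih =>
    have h1 := floor_step_pos (s k) _ ih.1
    have h2 := h (k + 1) (by omega)
    have h3 := incPos_ge (s k)
    change ⌊stepQ (s k) (walkQ s 0 k)⌋ ≠ 0 at h2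
    change 1 ≤ ⌊stepQ (s k) (walkQ s 0 k)⌋ ∧ ⌊stepQ (s k) (walkQ s 0 k)⌋ - _ = _
    rw [Finset.sum_range_succ]
    omega

lemma sum_neg (s : ℕ → Fin 4) (N : ℕ) (h : ∀ n ≥ N, ⌊walkQ s 0 n⌋ ≠ 0)
    (hN : ⌊walkQ s 0 N⌋ ≤ -1) (m : ℕ) (hm : N ≤ m) : ⌊walkQ s 0 m⌋ ≤ -1 ∧
      ⌊walkQ s 0 m⌋ - ∑ i ∈ Finset.range m, incNeg (s i)
        = ⌊walkQ s 0 N⌋ - ∑ i ∈ Finset.range N, incNeg (s i) := by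
  induction m, hm using Nat.le_induction with
  | base => exact ⟨hN, rfl⟩
  | succ k hk ih =>
    have h1 := floor_step_neg (s k) _ ih.1
    have h2 := h (k + 1) (by omega)
    have h3 := incNeg_le (s k)
    change ⌊stepQ (s k) (walkQ s 0 k)⌋ ≠ 0 at h2
    change ⌊stepQ (s k) (walkQ s 0 k)⌋ ≤ -1 ∧ ⌊stepQ (s k) (walkQ s 0 k)⌋ - _ = _
    rw [Finset.sum_range_succ]
    omega

lemma bddAbove_of_eventually (f : ℕ → ℝ) (N : ℕ) (C : ℝ) (h : ∀ n ≥ N, f n ≤ C) :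
    BddAbove (Set.range f) := by
  refine IsBoundedUnder.bddAbove_range ⟨C, ?_⟩
  simp only [eventually_map]
  exact eventually_atTop.2 ⟨N, h⟩

/-- The interval `[0,1)` is recurrent for the simple random walk on the Schreier graph `Γ`:
for the walk started at `γ₀ = 0`, almost surely there are infinitely many `n` with
`0 ≤ γ_n < 1`.  The probability space is any space carrying an i.i.d. sequence `s` of
uniformly distributed choices in `{1,2,3,4}` (i.e. the uniform product measure on
`{1,2,3,4}^ℕ`). -/
theorem interval_recurrent_for_simple_random_walk
    {Ω : Type*} [MeasurableSpace Ω] (P : Measure Ω) [IsProbabilityMeasure P]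
    (s : ℕ → Ω → Fin 4)
    (hmeas : ∀ n i, MeasurableSet {ω | s n ω = i})
    (hiid : ∀ (n : ℕ) (c : ℕ → Fin 4),
      P {ω | ∀ i < n, s i ω = c i} = (4 : ENNReal)⁻¹ ^ n) :
    ∀ᵐ ω ∂P,
      {n : ℕ | 0 ≤ walkQ (fun i => s i ω) 0 n ∧ walkQ (fun i => s i ω) 0 n < 1}.Infinite := by

  have hs := measurable_choice s hmeas
  have H1 := converge_of_bddAbove P s hs hiid (fun a => -(incPos a : ℝ))
    (by simp [Fin.sum_univ_four, incPos])
  have H2 := converge_of_bddAbove P s hs hiid (fun a => (incNeg a : ℝ))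
    (by simp [Fin.sum_univ_four, incNeg])
  have H3 := converge_of_bddAbove P s hs hiid (fun a => (incNeg a : ℝ) ^ 2 - 1 / 2)
    (by simp [Fin.sum_univ_four, incNeg]; norm_num)
  filter_upwards [H1, H2, H3] with ω h1 h2 h3
  by_contra hfin
  rw [Set.not_infinite] at hfin
  obtain ⟨M, hM⟩ := hfin.bddAbove
  have hne : ∀ n ≥ M + 1, ⌊walkQ (fun i => s i ω) 0 n⌋ ≠ 0 := by
    intro n hn h0
    rw [Int.floor_eq_zero_iff] at h0
    have : n ≤ M := hM ⟨h0.1, h0.2⟩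
    omega
  rcases lt_or_gt_of_ne (hne (M + 1) le_rfl) with hlt | hgt
  · have hS := sum_neg (fun i => s i ω) (M + 1) hne (by omega)
    have hc := h2 (by
      refine bddAbove_of_eventually _ (M + 1) ((-1 - (⌊walkQ (fun i => s i ω) 0 (M + 1)⌋
        - ∑ i ∈ Finset.range (M + 1), incNeg (s i ω)) : ℤ) : ℝ) ?_
      intro n hn
      have := hS n hn
      rw [← Int.cast_sum, Int.cast_le]
      omega)
    obtain ⟨K, hK⟩ := Metric.tendsto_atTop.1 hc (1 / 2) (by norm_num)
    have hz : ∀ n ≥ K, incNeg (s n ω) = 0 := by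
      intro n hn
      have := hK n hn
      revert this
      generalize s n ω = a
      fin_cases a <;> simp [incNeg] <;> norm_num
    have hc3 := h3 (by
      refine bddAbove_of_eventually _ K
        (∑ i ∈ Finset.range K, ((incNeg (s i ω) : ℝ) ^ 2 - 1 / 2)) ?_
      intro n hn
      induction n, hn using Nat.le_induction with
      | base => exact le_rfl
      | succ k hk ih =>
        rw [Finset.sum_range_succ, hz k hk]
        norm_num at ih ⊢
        linarith)
    obtain ⟨L, hL⟩ := Metric.tendsto_atTop.1 hc3 (1 / 2) (by norm_num)
    have := hL L le_rfl
    revert this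
    generalize s L ω = a
    fin_cases a <;> simp [incNeg] <;> norm_num [abs_of_pos]
  · have hS := sum_pos (fun i => s i ω) (M + 1) hne (by omega)
    have hc := h1 (by
      refine bddAbove_of_eventually _ (M + 1) ((-1 + (⌊walkQ (fun i => s i ω) 0 (M + 1)⌋
        - ∑ i ∈ Finset.range (M + 1), incPos (s i ω)) : ℤ) : ℝ) ?_
      intro n hn
      have := hS n hn
      rw [Finset.sum_neg_distrib, ← Int.cast_sum, ← Int.cast_neg, Int.cast_le]
      omega)
    obtain ⟨L, hL⟩ := Metric.tendsto_atTop.1 hc (1 / 2) (by norm_num)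
    have := hL L le_rfl
    revert this
    generalize s L ω = a
    fin_cases a <;> simp [incPos] <;> norm_num
end
end
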